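/- Let k be a field of characteristic p > 0 and let F ∈ k[X_1,…,X_n] be a p-polynomial such that for some index i₀ the degree of F in X_{i₀} equals p^{N_{i₀}} for some N_{i₀} ≥ 0. Let A be a commutative k-algebra and let g ∈ A[X_1,…,X_n]. Denote by g(X), g(X'), F(X), F(X') the images of g and F in A[X_1,…,X_n, X'_1,…,X'_n] under the two coordinate inclusions, and by g(X+X') the result of substituting X_i + X'_i for X_i in g. If g(X+X') − g(X) − g(X') lies in the ideal of A[X_1,…,X_n, X'_1,…,X'_n] generated by F(X) and F(X'), then there exists a unique p-polynomial G ∈ A[X_1,…,X_n] with deg_{X_{i₀}}(G) < p^{N_{i₀}} such that g − G lies in the ideal of A[X_1,…,X_n] generated by F. -/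

import Mathlib

open MvPolynomial

/-- A `p`-polynomial over a commutative ring `A` is a polynomial in `A[X_1, …, X_n]`
that is an `A`-linear combination of the monomials `X i ^ p ^ j`. -/
def IsPPolynomial {A : Type*} [CommRing A] (p : ℕ) {n : ℕ}
    (F : MvPolynomial (Fin n) A) : Prop :=
  F ∈ Submodule.span A {g : MvPolynomial (Fin n) A | ∃ i : Fin n, ∃ j : ℕ, g = X i ^ p ^ j}

section Division

variable {σ A : Type*} [CommRing A]

/-- Euclidean division with respect to the variable `X i` by a polynomial whose leading
coefficient in `X i` is a unit of the base ring. -/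
theorem MvPolynomial.exists_eq_mul_add_degreeOf_lt (i : σ) {q : ℕ} {u v : A} (huv : u * v = 1)
    {R : MvPolynomial σ A} (hR : R.degreeOf i < q) (g : MvPolynomial σ A) :
    ∃ Q r : MvPolynomial σ A, g = Q * (C u * X i ^ q + R) + r ∧ r.degreeOf i < q := by
  suffices H : ∀ d : ℕ, ∀ g : MvPolynomial σ A, g.degreeOf i < d →
      ∃ Q r : MvPolynomial σ A, g = Q * (C u * X i ^ q + R) + r ∧ r.degreeOf i < q from
    H _ g (Nat.lt_succ_self _)
  intro d
  induction d with
  | zero => intro g hg; omega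
  | succ d ih =>
    intro g hg
    rw [← support_sum_monomial_coeff g]
    refine Finset.sum_induction _
      (fun g ↦ ∃ Q r : MvPolynomial σ A, g = Q * (C u * X i ^ q + R) + r ∧ r.degreeOf i < q)
      ?_ ⟨0, 0, by simp, by simp; omega⟩ ?_
    · rintro _ _ ⟨Q₁, r₁, rfl, h₁⟩ ⟨Q₂, r₂, rfl, h₂⟩
      exact ⟨Q₁ + Q₂, r₁ + r₂, by ring, (degreeOf_add_le i r₁ r₂).trans_lt (max_lt h₁ h₂)⟩
    · intro m hm
      have hmd := (monomial_le_degreeOf i hm).trans_lt hg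
      rcases lt_or_ge (m i) q with hlt | hle
      · refine ⟨0, monomial m (coeff m g), by simp, ?_⟩
        rwa [degreeOf_monomial_eq _ _ (mem_support_iff.mp hm)]
      · set M : MvPolynomial σ A := monomial (m - Finsupp.single i q) (coeff m g * v) with hM
        have hMi : M.degreeOf i ≤ m i - q := by
          rw [degreeOf_le_iff]
          intro s hs
          have := support_monomial_subset hs
          rw [Finset.mem_singleton] at this
          simp [this]
        have hlow : (-(M * R)).degreeOf i < d := by
          rw [degreeOf_neg]
          have := degreeOf_mul_le i M R
          omega
        obtain ⟨Q, r, hQ, hr⟩ := ih _ hlow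
        refine ⟨M + Q, r, ?_, hr⟩
        have hlead : monomial m (coeff m g) = M * (C u * X i ^ q) := by
          rw [hM, C_mul_X_pow_eq_monomial, monomial_mul,
            tsub_add_cancel_of_le (Finsupp.single_le_iff.mpr hle), mul_assoc, mul_comm v, huv,
            mul_one]
        rw [hlead]
        linear_combination hQ

/-- A multiple of a polynomial of degree `q` in `X i` with unit leading coefficient vanishes
if its degree in `X i` is less than `q`. -/
theorem MvPolynomial.mul_eq_zero_of_degreeOf_lt (i : σ) {q : ℕ} {u v : A} (huv : u * v = 1)
    {R : MvPolynomial σ A} (hR : R.degreeOf i < q) {Q : MvPolynomial σ A}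
    (h : (Q * (C u * X i ^ q + R)).degreeOf i < q) : Q * (C u * X i ^ q + R) = 0 := by
  by_cases hQ : Q = 0
  · simp [hQ]
  exfalso
  obtain ⟨m, hm, hmi⟩ := Finset.exists_mem_eq_sup Q.support
    (Finset.nonempty_of_ne_empty (mt support_eq_empty.mp hQ)) (fun s ↦ s i)
  rw [← degreeOf_eq_sup] at hmi
  have hlow : coeff (m + Finsupp.single i q) (Q * R) = 0 := by
    rw [← notMem_support_iff]
    apply notMem_support_of_degreeOf_lt i
    have := degreeOf_mul_le i Q R
    simp
    omega
  have htop : coeff (m + Finsupp.single i q) (Q * (C u * X i ^ q + R)) = coeff m Q * u := by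
    rw [mul_add, coeff_add, hlow, add_zero, C_mul_X_pow_eq_monomial, coeff_mul_monomial]
  have hzero : coeff m Q * u = 0 := by
    rw [← htop, ← notMem_support_iff]
    apply notMem_support_of_degreeOf_lt i
    simp
    omega
  apply mem_support_iff.mp hm
  rw [← mul_one (coeff m Q), ← huv, ← mul_assoc, hzero, zero_mul]

/-- Substituting polynomials linear in `X s` for `X i` and free of `X s` for the other variables
does not increase the degree. -/
theorem MvPolynomial.degreeOf_aeval_le {τ : Type*} [DecidableEq τ] (s : σ) (i : τ)
    (f : τ → MvPolynomial σ A) (hf : ∀ j, (f j).degreeOf s ≤ if j = i then 1 else 0)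
    (g : MvPolynomial τ A) : (aeval f g).degreeOf s ≤ g.degreeOf i := by
  rw [aeval_def, eval₂_eq]
  refine (degreeOf_sum_le _ _ _).trans (Finset.sup_le fun m hm ↦ ?_)
  refine (degreeOf_C_mul_le _ _ _).trans ((degreeOf_prod_le _ _ _).trans ?_)
  refine le_trans ?_ (monomial_le_degreeOf i hm)
  calc ∑ j ∈ m.support, (f j ^ m j).degreeOf s
      ≤ ∑ j ∈ m.support, if j = i then m j else 0 := by
        refine Finset.sum_le_sum fun j _ ↦ (degreeOf_pow_le _ _ _).trans ?_
        have := Nat.mul_le_mul_left (m j) (hf j)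
        split_ifs at this ⊢ <;> simpa using this
    _ ≤ m i := by
        rw [Finset.sum_ite_eq']
        split_ifs <;> simp

end Division

section Additive

universe w

variable {A : Type w} [CommRing A]

/-- In characteristic `p`, the exponents of an additive polynomial are powers of `p`. -/
theorem Polynomial.exists_eq_pow_of_coeff_ne_zero (p : ℕ) [Fact p.Prime] [CharP A p]
    (f : Polynomial A)
    (hf : Polynomial.aeval (Polynomial.X + Polynomial.C Polynomial.X) f =
      Polynomial.aeval (Polynomial.X : Polynomial (Polynomial A)) f +
        Polynomial.aeval (Polynomial.C Polynomial.X) f)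
    {e : ℕ} (he : f.coeff e ≠ 0) : ∃ j, e = p ^ j := by
  have htaylor : Polynomial.taylor Polynomial.X (f.map Polynomial.C) =
      f.map Polynomial.C + Polynomial.C f := by
    have h₁ : Polynomial.taylor Polynomial.X (f.map Polynomial.C) =
        Polynomial.aeval (Polynomial.X + Polynomial.C Polynomial.X) f := by
      rw [Polynomial.taylor_apply, Polynomial.comp, Polynomial.eval₂_map]
      rfl
    have h₂ : Polynomial.aeval (Polynomial.X : Polynomial (Polynomial A)) f =
        f.map Polynomial.C := rfl
    have h₃ : Polynomial.aeval (Polynomial.C Polynomial.X : Polynomial (Polynomial A)) f =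
        Polynomial.C f := by
      have h := Polynomial.hom_eval₂ f Polynomial.C
        (Polynomial.C : Polynomial A →+* Polynomial (Polynomial A)) Polynomial.X
      rw [Polynomial.eval₂_C_X] at h
      exact h.symm
    rw [h₁, hf, h₂, h₃]
  have hcoeff : ∀ a b : ℕ, ((a + b).choose b : A) * f.coeff (a + b) =
      ((f.map Polynomial.C + Polynomial.C f).coeff b).coeff a := by
    intro a b
    have hmap : Polynomial.hasseDeriv b (f.map Polynomial.C) =
        (Polynomial.hasseDeriv b f).map (Polynomial.C : A →+* Polynomial A) := by
      ext1 m
      simp [Polynomial.hasseDeriv_coeff]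
    rw [← htaylor, Polynomial.taylor_coeff, hmap, Polynomial.eval_map, Polynomial.eval₂_C_X,
      Polynomial.hasseDeriv_coeff]
  have hpos : 0 < e := by
    rw [Nat.pos_iff_ne_zero]
    rintro rfl
    have h := hcoeff 0 0
    simp at h
    exact he h
  refine ⟨_, Choose.eq_pow_multiplicity_of_choose_modEq_zero_nat (p := p) hpos fun b hb ↦ ?_⟩
  rw [Finset.mem_Icc] at hb
  by_contra hndvd
  rw [Nat.modEq_zero_iff_dvd] at hndvd
  have hunit : IsUnit ((e.choose b : ℕ) : A) := (CharP.isUnit_natCast_iff Fact.out).mpr hndvd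
  have h := hcoeff (e - b) b
  rw [Nat.sub_add_cancel (by omega), Polynomial.coeff_add, Polynomial.coeff_map,
    Polynomial.coeff_add, Polynomial.coeff_C_of_ne_zero (by omega),
    Polynomial.coeff_C_of_ne_zero (by omega), Polynomial.coeff_zero, add_zero] at h
  exact he (hunit.mul_right_eq_zero.mp h)

/-- In characteristic `p`, additive polynomials are `p`-polynomials. -/
theorem isPPolynomial_of_additive (p : ℕ) [Fact p.Prime] [CharP A p] {n : ℕ}
    (G : MvPolynomial (Fin n) A)
    (hG : aeval (fun i : Fin n =>
          (X (Sum.inl i) + X (Sum.inr i) : MvPolynomial (Fin n ⊕ Fin n) A)) G =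
        rename Sum.inl G + rename Sum.inr G) : IsPPolynomial p G := by
  have hadd : ∀ (B : Type w) [CommRing B] [Algebra A B] (x y : Fin n → B),
      aeval (x + y) G = aeval x G + aeval y G := by
    intro B _ _ x y
    have h := congrArg (aeval (Sum.elim x y)) hG
    rw [comp_aeval_apply, map_add, aeval_rename, aeval_rename] at h
    simpa [← Pi.add_def] using h
  have hsum : G = ∑ i, aeval (Pi.single i (X i) : Fin n → MvPolynomial (Fin n) A) G := by
    let φ : (Fin n → MvPolynomial (Fin n) A) →+ MvPolynomial (Fin n) A :=
      AddMonoidHom.mk' (fun x ↦ aeval x G) (hadd _)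
    have h : φ (∑ i, Pi.single i (X i)) = ∑ i, φ (Pi.single i (X i)) := map_sum _ _ _
    rw [Finset.univ_sum_single] at h
    simpa [φ, aeval_X_left_apply] using h
  rw [hsum]
  refine Submodule.sum_mem _ fun i _ ↦ ?_
  set f : Polynomial A := aeval (Pi.single i Polynomial.X : Fin n → Polynomial A) G with hf
  have heval : ∀ (B : Type w) [CommRing B] [Algebra A B] (x : B),
      Polynomial.aeval x f = aeval (Pi.single i x : Fin n → B) G := by
    intro B _ _ x
    rw [hf, comp_aeval_apply]
    congr 2
    ext j
    by_cases h : j = i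
    · subst h; simp
    · simp [h]
  have hfadd : Polynomial.aeval (Polynomial.X + Polynomial.C Polynomial.X) f =
      Polynomial.aeval (Polynomial.X : Polynomial (Polynomial A)) f +
        Polynomial.aeval (Polynomial.C Polynomial.X) f := by
    rw [heval, heval, heval, Pi.single_add, hadd]
  rw [← heval, Polynomial.aeval_eq_sum_range]
  refine Submodule.sum_mem _ fun e _ ↦ ?_
  by_cases he : f.coeff e = 0
  · simp [he]
  · obtain ⟨j, rfl⟩ := Polynomial.exists_eq_pow_of_coeff_ne_zero p f hfadd he
    exact Submodule.smul_mem _ _ (Submodule.subset_span ⟨i, j, rfl⟩)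

end Additive

section PPolynomial

variable {A : Type*} [CommRing A] {p n : ℕ}

theorem IsPPolynomial.additive [Fact p.Prime] [CharP A p] {F : MvPolynomial (Fin n) A}
    (hF : IsPPolynomial p F) :
    aeval (fun i : Fin n =>
          (X (Sum.inl i) + X (Sum.inr i) : MvPolynomial (Fin n ⊕ Fin n) A)) F =
        rename Sum.inl F + rename Sum.inr F := by
  induction hF using Submodule.span_induction with
  | mem x hx =>
    obtain ⟨i, j, rfl⟩ := hx
    simp [add_pow_char_pow]
  | zero => simp
  | add x y _ _ hx hy => simp only [map_add, hx, hy]; ring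
  | smul a x _ hx => simp only [map_smul, hx, smul_add]

theorem IsPPolynomial.map {B : Type*} [CommRing B] (f : A →+* B) {F : MvPolynomial (Fin n) A}
    (hF : IsPPolynomial p F) : IsPPolynomial p (MvPolynomial.map f F) := by
  induction hF using Submodule.span_induction with
  | mem x hx =>
    obtain ⟨i, j, rfl⟩ := hx
    exact Submodule.subset_span ⟨i, j, by simp⟩
  | zero => rw [map_zero]; exact Submodule.zero_mem _
  | add x y _ _ hx hy => rw [map_add]; exact Submodule.add_mem _ hx hy
  | smul a x _ hx =>
    rw [smul_eq_C_mul, map_mul, map_C, ← smul_eq_C_mul]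
    exact Submodule.smul_mem _ _ hx

theorem IsPPolynomial.exists_eq_single {F : MvPolynomial (Fin n) A} (hF : IsPPolynomial p F)
    {m : Fin n →₀ ℕ} (hm : m ∈ F.support) : ∃ i j, m = Finsupp.single i (p ^ j) := by
  rw [mem_support_iff] at hm
  contrapose! hm
  induction hF using Submodule.span_induction with
  | mem x hx =>
    obtain ⟨i, j, rfl⟩ := hx
    rw [coeff_X_pow, if_neg (hm i j).symm]
  | zero => simp
  | add x y _ _ hx hy => rw [coeff_add, hx, hy, add_zero]
  | smul a x _ hx => rw [coeff_smul, hx, smul_zero]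

/-- A `p`-polynomial of degree `q > 0` in `X i` has constant leading coefficient in `X i`. -/
theorem IsPPolynomial.exists_eq_C_mul_X_pow_add {F : MvPolynomial (Fin n) A}
    (hF : IsPPolynomial p F) (i : Fin n) {q : ℕ} (hq : 0 < q) (hdeg : F.degreeOf i = q) :
    ∃ (c : A) (R : MvPolynomial (Fin n) A), c ≠ 0 ∧ R.degreeOf i < q ∧
      F = C c * X i ^ q + R := by
  have hsingle : ∀ m ∈ F.support, m i = q → m = Finsupp.single i q := by
    intro m hm hmi
    obtain ⟨i', j, rfl⟩ := hF.exists_eq_single hm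
    by_cases h : i' = i
    · subst h
      rw [← hmi, Finsupp.single_eq_same]
    · simp [h] at hmi
      omega
  refine ⟨coeff (Finsupp.single i q) F,
    F - C (coeff (Finsupp.single i q) F) * X i ^ q, ?_, ?_, by ring⟩
  · have hF0 : F ≠ 0 := by
      rintro rfl
      simp at hdeg
      omega
    obtain ⟨m, hm, hmi⟩ := Finset.exists_mem_eq_sup F.support
      (Finset.nonempty_of_ne_empty (mt support_eq_empty.mp hF0)) (fun s ↦ s i)
    rw [← degreeOf_eq_sup, hdeg] at hmi
    rw [← hsingle m hm hmi.symm]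
    exact mem_support_iff.mp hm
  · rw [degreeOf_lt_iff hq]
    intro m hm
    rw [mem_support_iff, coeff_sub, C_mul_X_pow_eq_monomial, coeff_monomial] at hm
    by_cases h : Finsupp.single i q = m
    · simp [h] at hm
    · rw [if_neg h, sub_zero] at hm
      have hle := monomial_le_degreeOf i (mem_support_iff.mpr hm)
      refine lt_of_le_of_ne (hle.trans hdeg.le) fun hmi ↦ h ?_
      exact (hsingle m (mem_support_iff.mpr hm) hmi).symm

end PPolynomial

/-- If `F` has degree `q` and unit leading coefficient in `X i`, the only element of the ideal
generated by the two copies of `F` having degree less than `q` in both copies of `X i` is zero. -/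
theorem MvPolynomial.eq_zero_of_mem_span_rename {σ A : Type*} [CommRing A] (i : σ) {q : ℕ}
    {u v : A} (huv : u * v = 1) {R : MvPolynomial σ A} (hR : R.degreeOf i < q)
    {D : MvPolynomial (σ ⊕ σ) A}
    (hD : D ∈ Ideal.span {rename Sum.inl (C u * X i ^ q + R), rename Sum.inr (C u * X i ^ q + R)})
    (hl : D.degreeOf (Sum.inl i) < q) (hr : D.degreeOf (Sum.inr i) < q) : D = 0 := by
  classical
  obtain ⟨a, b, rfl⟩ := Ideal.mem_span_pair.mp hD
  have hFl : rename Sum.inl (C u * X i ^ q + R) =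
      (C u * X (Sum.inl i) ^ q + rename Sum.inl R : MvPolynomial (σ ⊕ σ) A) := by simp
  have hFr : rename Sum.inr (C u * X i ^ q + R) =
      (C u * X (Sum.inr i) ^ q + rename Sum.inr R : MvPolynomial (σ ⊕ σ) A) := by simp
  have hRl : (rename Sum.inl R : MvPolynomial (σ ⊕ σ) A).degreeOf (Sum.inl i) < q := by
    rwa [degreeOf_rename_of_injective Sum.inl_injective]
  have hRr : (rename Sum.inr R : MvPolynomial (σ ⊕ σ) A).degreeOf (Sum.inr i) < q := by
    rwa [degreeOf_rename_of_injective Sum.inr_injective]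
  have hindep : (rename Sum.inl (C u * X i ^ q + R) : MvPolynomial (σ ⊕ σ) A).degreeOf
      (Sum.inr i) = 0 := by
    by_contra h
    have hmem := vars_rename Sum.inl _ (mem_vars_iff_degreeOf_ne_zero.mpr h)
    simp at hmem
  obtain ⟨Q, r, rfl, hdr⟩ := exists_eq_mul_add_degreeOf_lt (Sum.inr i) huv hRr a
  rw [← hFr] at hr hl ⊢
  set Fl := rename Sum.inl (C u * X i ^ q + R)
  set Fr := rename Sum.inr (C u * X i ^ q + R)
  have hsplit : (Q * Fr + r) * Fl + b * Fr = (Q * Fl + b) * Fr + r * Fl := by ring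
  rw [hsplit] at hr hl ⊢
  have hrFl : (r * Fl).degreeOf (Sum.inr i) < q := by
    have := degreeOf_mul_le (Sum.inr i) r Fl
    omega
  have hz : (Q * Fl + b) * Fr = 0 := by
    have hlt : ((Q * Fl + b) * Fr).degreeOf (Sum.inr i) < q := by
      have h := degreeOf_sub_le (Sum.inr i) ((Q * Fl + b) * Fr + r * Fl) (r * Fl)
      rw [add_sub_cancel_right] at h
      exact h.trans_lt (max_lt hr hrFl)
    rw [hFr] at hlt ⊢
    exact mul_eq_zero_of_degreeOf_lt _ huv hRr hlt
  rw [hz, zero_add] at hl ⊢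
  rw [hFl] at hl ⊢
  exact mul_eq_zero_of_degreeOf_lt _ huv hRl hl

/-- The additivity defect of `G` has degree at most that of `G` in each copy of a variable. -/
theorem MvPolynomial.degreeOf_additivity_defect_lt {σ A : Type*} [CommRing A] {i : σ} {q : ℕ}
    (s : σ ⊕ σ) (hs : s = Sum.inl i ∨ s = Sum.inr i) {G : MvPolynomial σ A}
    (hG : G.degreeOf i < q) :
    (aeval (fun i : σ => (X (Sum.inl i) + X (Sum.inr i) : MvPolynomial (σ ⊕ σ) A)) G
      - rename Sum.inl G - rename Sum.inr G).degreeOf s < q := by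
  classical
  rcases subsingleton_or_nontrivial A with _ | _
  · rw [Subsingleton.elim (_ - _) 0, degreeOf_zero]
    exact Nat.zero_lt_of_lt hG
  have hrename (f : σ → σ ⊕ σ) :
      rename f G = aeval (fun j ↦ (X (f j) : MvPolynomial (σ ⊕ σ) A)) G := by
    rw [← aeval_X_left_apply (rename f G), aeval_rename, Function.comp_def]
  refine (degreeOf_sub_le _ _ _).trans_lt (max_lt
    ((degreeOf_sub_le _ _ _).trans_lt (max_lt ?_ ?_)) ?_)
  · refine (degreeOf_aeval_le s i _ (fun j ↦ (degreeOf_add_le _ _ _).trans ?_) G).trans_lt hG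
    rcases hs with rfl | rfl <;> simp [degreeOf_X, eq_comm]
  · rw [hrename]
    refine (degreeOf_aeval_le s i _ (fun j ↦ ?_) G).trans_lt hG
    rcases hs with rfl | rfl <;> simp [degreeOf_X, eq_comm]
  · rw [hrename]
    refine (degreeOf_aeval_le s i _ (fun j ↦ ?_) G).trans_lt hG
    rcases hs with rfl | rfl <;> simp [degreeOf_X, eq_comm]

/-- **Homomorphisms from the vanishing locus of a p-polynomial into 𝔾ₐ are given by
unique p-polynomials of bounded degree (affine-coordinate form).**
Let `k` be a field of characteristic `p > 0`, `F ∈ k[X_1,…,X_n]` a `p`-polynomial with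
`deg_{X i₀} F = p ^ N₀`, `A` a commutative `k`-algebra and `g ∈ A[X_1,…,X_n]`.  If
`g(X+X') - g(X) - g(X')` lies in the ideal of `A[X_1,…,X_n,X'_1,…,X'_n]` generated by
`F(X)` and `F(X')` (i.e. `g` defines a group homomorphism `U_A → 𝔾ₐ` on
`U_A = Spec A[X]/(F)`), then there is a unique `p`-polynomial `G ∈ A[X_1,…,X_n]` with
`deg_{X i₀} G < p ^ N₀` and `g - G` in the ideal generated by `F`. -/
theorem hom_from_vanishing_locus_is_unique_p_polynomial {k : Type*} [Field k]
    (p : ℕ) (hp : 0 < p) [CharP k p]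
    {n : ℕ} (F : MvPolynomial (Fin n) k) (hF : IsPPolynomial p F)
    (i₀ : Fin n) (N₀ : ℕ) (hdeg : F.degreeOf i₀ = p ^ N₀)
    (A : Type*) [CommRing A] [Algebra k A]
    (g : MvPolynomial (Fin n) A)
    (hadd : aeval (fun i : Fin n =>
          (X (Sum.inl i) + X (Sum.inr i) : MvPolynomial (Fin n ⊕ Fin n) A)) g
        - rename Sum.inl g - rename Sum.inr g ∈
      Ideal.span {rename Sum.inl (MvPolynomial.map (algebraMap k A) F),
                  rename Sum.inr (MvPolynomial.map (algebraMap k A) F)}) :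
    ∃! G : MvPolynomial (Fin n) A,
      IsPPolynomial p G ∧ G.degreeOf i₀ < p ^ N₀ ∧
        g - G ∈ Ideal.span {MvPolynomial.map (algebraMap k A) F} := by
  rcases subsingleton_or_nontrivial A with _ | _
  · refine ⟨0, ⟨Submodule.zero_mem _, by simpa using pow_pos hp N₀, ?_⟩,
      fun _ _ ↦ Subsingleton.elim _ _⟩
    rw [Subsingleton.elim (g - 0) 0]
    exact Ideal.zero_mem _
  have : Fact p.Prime := ⟨(CharP.char_is_prime_or_zero k p).resolve_right hp.ne'⟩
  have : CharP A p := charP_of_injective_algebraMap (algebraMap k A).injective p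
  have hq : 0 < p ^ N₀ := pow_pos hp N₀
  have hFadd := (hF.map (algebraMap k A)).additive
  obtain ⟨c, R₀, hc, hR₀, hFeq⟩ := hF.exists_eq_C_mul_X_pow_add i₀ hq hdeg
  have huv : algebraMap k A c * algebraMap k A c⁻¹ = 1 := by
    rw [← map_mul, mul_inv_cancel₀ hc, map_one]
  set u := algebraMap k A c
  set R := MvPolynomial.map (algebraMap k A) R₀
  have hR : R.degreeOf i₀ < p ^ N₀ := by
    rw [degreeOf_lt_iff hq] at hR₀ ⊢
    exact fun m hm ↦ hR₀ m (support_map_subset _ _ hm)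
  have hFA : MvPolynomial.map (algebraMap k A) F = C u * X i₀ ^ p ^ N₀ + R := by
    rw [hFeq]
    simp [u, R]
  rw [hFA] at hadd hFadd ⊢
  obtain ⟨Q, G, hgG, hGdeg⟩ := exists_eq_mul_add_degreeOf_lt i₀ huv hR g
  have hgmem : g - G ∈ Ideal.span {C u * X i₀ ^ p ^ N₀ + R} := by
    rw [hgG, add_sub_cancel_right]
    exact Ideal.mul_mem_left _ _ (Ideal.mem_span_singleton_self _)
  refine ⟨G, ⟨?_, hGdeg, hgmem⟩, ?_⟩
  · apply isPPolynomial_of_additive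
    rw [← sub_eq_zero, ← sub_sub]
    refine eq_zero_of_mem_span_rename i₀ huv hR ?_ ?_ ?_
    · set P := C u * X i₀ ^ p ^ N₀ + R
      set I := Ideal.span {rename Sum.inl P, rename Sum.inr P}
      have hl : rename Sum.inl P ∈ I := Ideal.subset_span (by simp)
      have hr : rename Sum.inr P ∈ I := Ideal.subset_span (by simp)
      rw [hgG] at hadd
      simp only [map_add, map_mul, hFadd] at hadd
      have hsub := I.sub_mem hadd (I.sub_mem (I.sub_mem
        (I.mul_mem_left (aeval (fun i : Fin n =>
          (X (Sum.inl i) + X (Sum.inr i) : MvPolynomial (Fin n ⊕ Fin n) A)) Q)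
          (I.add_mem hl hr))
        (I.mul_mem_left (rename Sum.inl Q) hl)) (I.mul_mem_left (rename Sum.inr Q) hr))
      convert hsub using 1
      ring
    · exact degreeOf_additivity_defect_lt _ (Or.inl rfl) hGdeg
    · exact degreeOf_additivity_defect_lt _ (Or.inr rfl) hGdeg
  · rintro G' ⟨-, hG'deg, hG'⟩
    have hmem : G' - G ∈ Ideal.span {C u * X i₀ ^ p ^ N₀ + R} := by
      simpa using Ideal.sub_mem _ hgmem hG'
    obtain ⟨S, hS⟩ := Ideal.mem_span_singleton'.mp hmem
    have hlt := (degreeOf_sub_le i₀ G' G).trans_lt (max_lt hG'deg hGdeg)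
    rw [← hS] at hlt
    have hz := mul_eq_zero_of_degreeOf_lt i₀ huv hR hlt
    rw [hS] at hz
    exact sub_eq_zero.mp hz
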